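/- For all integers n ≥ 2, the polynomials a_n satisfy the derivative-free recurrence a_{n+1} = 2(n-1)·a_{n-2} + Σ_{k=0}^{n-1} a_k·a_{n-1-k}. -/

import Mathlib

/-!
Comparing with the defining recurrence, the claim is `a_n' = 2 (n - 1) a_{n-2}` for `n ≥ 2`,
proved by strong induction in `derivative_painleveA`. Differentiating
`a_{n+2} = a_{n+1}' + ∑_{i+j=n} a_i a_j` gives `a_{n+1}'' + 2 ∑_{i+j=n} a_i a_j'`. The induction
hypothesis turns the first term into `2 n a_{n-1}'`. In the second, `j = 0` contributes `2 a_n`,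
`j = 1` contributes nothing, and the remaining terms are `2 ∑_{i+j=n-2} 2 (j + 1) a_i a_j`, which is
`2 n ∑_{i+j=n-2} a_i a_j` after symmetrizing in `i` and `j`. The defining recurrence for `a_n`
collects all of this into `2 (n + 1) a_n`. This needs `n ≥ 2`; `a_2 = x ^ 2` and `a_3 = 4 x` are
immediate.
-/

open Polynomial Finset

/-- The polynomials `a_n` from the Hankel determinant representation of the
rational solutions of Painlevé II: `a₀ = x`, `a₁ = 1`,
`a_{n+1} = a_n' + ∑_{k=0}^{n-1} a_k a_{n-1-k}`. -/
noncomputable def painleveA : ℕ → ℝ[X]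
  | 0 => X
  | 1 => 1
  | n + 2 => derivative (painleveA (n + 1)) +
      ∑ k ∈ (Finset.range (n + 1)).attach, painleveA k * painleveA (n - k)
  decreasing_by
  · omega
  · have := Finset.mem_range.mp k.2; omega
  · omega

theorem painleveA_zero : painleveA 0 = X := by rw [painleveA]

theorem painleveA_one : painleveA 1 = 1 := by rw [painleveA]

theorem painleveA_add_two (n : ℕ) :
    painleveA (n + 2) = derivative (painleveA (n + 1)) +
      ∑ p ∈ antidiagonal n, painleveA p.1 * painleveA p.2 := by
  rw [painleveA, Finset.sum_attach (Finset.range (n + 1))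
    (fun k => painleveA k * painleveA (n - k)),
    Finset.Nat.sum_antidiagonal_eq_sum_range_succ (fun i j => painleveA i * painleveA j)]

/-- The weight `2 (j + 1)` averages to `i + j + 2 = n + 2` under the swap of `i` and `j`. -/
theorem sum_antidiagonal_weighted (a : ℕ → ℝ[X]) (n : ℕ) :
    ∑ p ∈ antidiagonal n, a p.1 * (2 * ((p.2 : ℝ[X]) + 1) * a p.2) =
      ((n : ℝ[X]) + 2) * ∑ p ∈ antidiagonal n, a p.1 * a p.2 := by
  have hswap : ∑ p ∈ antidiagonal n, ((p.1 : ℝ[X]) + 1) * (a p.1 * a p.2) =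
      ∑ p ∈ antidiagonal n, ((p.2 : ℝ[X]) + 1) * (a p.1 * a p.2) := by
    rw [← Finset.Nat.sum_antidiagonal_swap]
    exact Finset.sum_congr rfl fun p _ => by simp only [Prod.fst_swap, Prod.snd_swap]; ring
  calc _ = ∑ p ∈ antidiagonal n, ((p.2 : ℝ[X]) + 1) * (a p.1 * a p.2) +
        ∑ p ∈ antidiagonal n, ((p.2 : ℝ[X]) + 1) * (a p.1 * a p.2) := by
        rw [← Finset.sum_add_distrib]
        exact Finset.sum_congr rfl fun p _ => by ring
    _ = _ := by
        nth_rewrite 1 [← hswap]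
        rw [← Finset.sum_add_distrib, Finset.mul_sum]
        refine Finset.sum_congr rfl fun p hp => ?_
        rw [← Finset.HasAntidiagonal.mem_antidiagonal.mp hp]
        push_cast
        ring

theorem derivative_sum_antidiagonal (a : ℕ → ℝ[X]) (n : ℕ) :
    derivative (∑ p ∈ antidiagonal n, a p.1 * a p.2) =
      2 * ∑ p ∈ antidiagonal n, a p.1 * derivative (a p.2) := by
  have hswap : ∑ p ∈ antidiagonal n, derivative (a p.1) * a p.2 =
      ∑ p ∈ antidiagonal n, a p.1 * derivative (a p.2) := by
    rw [← Finset.Nat.sum_antidiagonal_swap]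
    exact Finset.sum_congr rfl fun p _ => mul_comm _ _
  simp only [derivative_sum, derivative_mul, Finset.sum_add_distrib]
  rw [hswap, two_mul]

/-- Shifting the index by two avoids truncated subtraction in `a_n' = 2 (n - 1) a_{n-2}`. -/
theorem derivative_painleveA (n : ℕ) :
    derivative (painleveA (n + 2)) = 2 * ((n : ℝ[X]) + 1) * painleveA n := by
  induction n using Nat.strong_induction_on with
  | _ n ih =>
    match n, ih with
    | 0, _ =>
      simp [painleveA_add_two, painleveA_zero, painleveA_one]
      ring
    | 1, _ =>
      simp [painleveA_add_two, painleveA_zero, painleveA_one,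
        Finset.Nat.antidiagonal_succ]
      ring
    | m + 2, ih =>
      have h1 : derivative (derivative (painleveA (m + 3))) =
          2 * ((m : ℝ[X]) + 2) * derivative (painleveA (m + 1)) := by
        have hc : 2 * (((m + 1 : ℕ) : ℝ[X]) + 1) = ((2 * (m + 2) : ℕ) : ℝ[X]) := by
          push_cast
          ring
        rw [ih (m + 1) (by omega), hc, derivative_natCast_mul]
        push_cast
        ring
      have h2 : ∑ p ∈ antidiagonal (m + 2), painleveA p.1 * derivative (painleveA p.2) =
          painleveA (m + 2) + ((m : ℝ[X]) + 2) *
            ∑ p ∈ antidiagonal m, painleveA p.1 * painleveA p.2 := by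
        rw [Finset.Nat.sum_antidiagonal_succ', Finset.Nat.sum_antidiagonal_succ',
          ← sum_antidiagonal_weighted]
        have hs : ∑ p ∈ antidiagonal m, painleveA p.1 * derivative (painleveA (p.2 + 1 + 1)) =
            ∑ p ∈ antidiagonal m,
              painleveA p.1 * (2 * ((p.2 : ℝ[X]) + 1) * painleveA p.2) :=
          Finset.sum_congr rfl fun p hp => by
            have := Finset.HasAntidiagonal.mem_antidiagonal.mp hp
            rw [ih p.2 (by omega)]
        simp only [hs, painleveA_zero, painleveA_one, zero_add, derivative_X, derivative_one]
        ring
      rw [painleveA_add_two (m + 2), derivative_add, h1, derivative_sum_antidiagonal, h2,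
        painleveA_add_two m]
      push_cast
      ring

/-- For all integers `n ≥ 2`,
`a_{n+1} = 2(n-1)·a_{n-2} + ∑_{k=0}^{n-1} a_k·a_{n-1-k}`. -/
theorem painleveA_derivative_free_recurrence (n : ℕ) (hn : 2 ≤ n) :
    painleveA (n + 1) = 2 * ((n : ℝ[X]) - 1) * painleveA (n - 2) +
      ∑ k ∈ Finset.range n, painleveA k * painleveA (n - 1 - k) := by
  obtain ⟨m, rfl⟩ : ∃ m, n = m + 2 := ⟨n - 2, by omega⟩
  rw [painleveA_add_two (m + 1), derivative_painleveA m,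
    Finset.Nat.sum_antidiagonal_eq_sum_range_succ (fun i j => painleveA i * painleveA j)]
  have hm : m + 2 - 1 = m + 1 := rfl
  rw [hm, Nat.add_sub_cancel]
  push_cast
  ring
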